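/- arXiv:2309.05105 — 2 statements merged into one kernel-verified Lean document; each statement's English description precedes it below -/
import Mathlib

section
/- If the probability mass function μ on Z is strictly positive (μ(z) > 0 for all z ∈ Z), then Q* is the unique maximizer of ⟨μ,Q⟩ over feasible Q: any feasible Q with ⟨μ,Q⟩ = ⟨μ,Q*⟩ satisfies Q = Q*. -/
open Finset

/-!
A Bellman operator is monotone, and adding a constant `a ≥ 0` to its argument raises its value by at
most `γ * a`. If `Q` is feasible and `a` is the maximum of `Q - Q*`, attained at `z`, then
`Q ≤ Q* + a`, so `Q z ≤ (T Q) z ≤ (T (Q* + a)) z ≤ Q* z + γ * a` as soon as `a ≥ 0`. Thus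
`a ≤ γ * a`, which rules out `a > 0`. Hence every feasible `Q` lies below `Q*`, and strictly
positive weights detect any strict inequality.
-/

section MinOverActions

variable {R X U : Type*} [Fintype U] [Nonempty U]

/-- The function `Q̲` of states obtained by minimizing `Q` over actions. -/
def minOverActions [SemilatticeInf R] (Q : X × U → R) (x : X) : R :=
  univ.inf' univ_nonempty fun u => Q (x, u)

theorem minOverActions_mono [SemilatticeInf R] :
    Monotone (minOverActions : (X × U → R) → X → R) :=
  fun _ _ h x => inf'_mono_fun fun u _ => h (x, u)

theorem minOverActions_add_const [SemilatticeInf R] [AddGroup R] [AddRightMono R]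
    (Q : X × U → R) (a : R) (x : X) :
    minOverActions (fun z => Q z + a) x = minOverActions Q x + a :=
  (map_finset_inf' (OrderIso.addRight a) univ_nonempty fun u => Q (x, u)).symm

end MinOverActions

section OrderedRing

variable {R : Type*} [Ring R] [LinearOrder R] [IsStrictOrderedRing R]

theorem eq_of_le_of_sum_mul_le_sum_mul {Z : Type*} [Fintype Z] {μ f g : Z → R}
    (hμ : ∀ z, 0 < μ z) (hfg : f ≤ g) (hsum : ∑ z, μ z * g z ≤ ∑ z, μ z * f z) : f = g := by
  have hterm : ∀ z ∈ univ, μ z * f z ≤ μ z * g z :=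
    fun z _ => mul_le_mul_of_nonneg_left (hfg z) (hμ z).le
  have hsum_eq : ∑ z, μ z * f z = ∑ z, μ z * g z := (sum_le_sum hterm).antisymm hsum
  funext z
  exact mul_left_cancel₀ (hμ z).ne' ((sum_eq_sum_iff_of_le hterm).1 hsum_eq z (mem_univ z))

/-- Blackwell's two conditions on an operator `T` on functions: monotonicity, and discounting of
nonnegative constants by the factor `γ`. -/
structure IsBlackwell {Z : Type*} (T : (Z → R) → Z → R) (γ : R) : Prop where
  monotone : Monotone T
  add_const_le : ∀ (f : Z → R) (a : R), 0 ≤ a → ∀ z, T (fun w => f w + a) z ≤ T f z + γ * a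

theorem IsBlackwell.le_of_le_apply_of_apply_le {Z : Type*} [Finite Z] {T : (Z → R) → Z → R} {γ : R}
    (hT : IsBlackwell T γ) (hγ : γ < 1) {f g : Z → R} (hf : f ≤ T f) (hg : T g ≤ g) : f ≤ g := by
  intro y
  have : Nonempty Z := ⟨y⟩
  obtain ⟨z, hz⟩ := Finite.exists_max fun w => f w - g w
  set a := f z - g z
  have hfg : f ≤ fun w => g w + a := fun w => sub_le_iff_le_add'.1 (hz w)
  suffices ha_nonpos : a ≤ 0 from sub_nonpos.1 ((hz y).trans ha_nonpos)
  by_contra! ha_pos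
  have hfz : f z ≤ g z + γ * a :=
    calc f z ≤ T f z := hf z
      _ ≤ T (fun w => g w + a) z := hT.monotone hfg z
      _ ≤ T g z + γ * a := hT.add_const_le g a ha_pos.le z
      _ ≤ g z + γ * a := by gcongr; exact hg z
  exact (sub_le_iff_le_add'.2 hfz).not_gt (mul_lt_of_lt_one_left ha_pos hγ)

section Bellman

variable {X U : Type*} [Fintype X] [Fintype U] [Nonempty U]

/-- The Bellman operator `T` with transition weights `P`, cost `c` and discount factor `γ`. The
weight of the transition from `x` to `x'` under the action `u` is `P u x x'`. -/
def bellman (P : U → X → X → R) (c : X × U → R) (γ : R) (Q : X × U → R) (z : X × U) : R :=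
  c z + γ * ∑ x', P z.2 z.1 x' * minOverActions Q x'

variable {P : U → X → X → R} {γ : R}

theorem bellman_mono (hP : ∀ u x x', 0 ≤ P u x x') (c : X × U → R) (hγ : 0 ≤ γ) :
    Monotone (bellman P c γ) := by
  intro Q Q' h z
  unfold bellman
  gcongr with x'
  · exact hP _ _ _
  · exact minOverActions_mono h x'

theorem bellman_add_const (P : U → X → X → R) (c : X × U → R) (γ : R) (Q : X × U → R) (a : R)
    (z : X × U) :
    bellman P c γ (fun w => Q w + a) z = bellman P c γ Q z + γ * ((∑ x', P z.2 z.1 x') * a) := by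
  simp only [bellman, minOverActions_add_const, mul_add, sum_add_distrib, sum_mul, add_assoc]

theorem isBlackwell_bellman (hP : ∀ u x x', 0 ≤ P u x x') (hP_sum : ∀ u x, ∑ x', P u x x' ≤ 1)
    (c : X × U → R) (hγ : 0 ≤ γ) : IsBlackwell (bellman P c γ) γ where
  monotone := bellman_mono hP c hγ
  add_const_le Q a ha z := by
    rw [bellman_add_const]
    gcongr
    exact mul_le_of_le_one_left ha (hP_sum _ _)

theorem stmt4_general (hP : ∀ u x x', 0 ≤ P u x x') (hP_sum : ∀ u x, ∑ x', P u x x' ≤ 1)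
    {c : X × U → R} (hγ0 : 0 ≤ γ) (hγ1 : γ < 1) {Qstar Q μ : X × U → R}
    (hQstar : Function.IsFixedPt (bellman P c γ) Qstar) (hμ : ∀ z, 0 < μ z)
    (hfeas : Q ≤ bellman P c γ Q) (hobj : ∑ z, μ z * Qstar z ≤ ∑ z, μ z * Q z) :
    Q = Qstar :=
  have hle : Q ≤ Qstar := (isBlackwell_bellman hP hP_sum c hγ0).le_of_le_apply_of_apply_le
    hγ1 hfeas hQstar.le
  eq_of_le_of_sum_mul_le_sum_mul hμ hle hobj

end Bellman

end OrderedRing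

/-- If the pmf `μ` on `Z` is strictly positive, then `Q*` is the unique maximizer of
`⟨μ,Q⟩` over feasible `Q`: any feasible `Q` with `⟨μ,Q⟩ = ⟨μ,Q*⟩` equals `Q*`. -/
theorem stmt4 {X U : Type*} [Fintype X] [Fintype U] [Nonempty X] [Nonempty U]
    (P : U → X → X → ℝ)
    (hP0 : ∀ u x x', 0 ≤ P u x x') (hP1 : ∀ u x, ∑ x' : X, P u x x' = 1)
    (c : X × U → ℝ) (hc : ∀ z, 0 ≤ c z)
    (γ : ℝ) (hγ0 : 0 < γ) (hγ1 : γ < 1)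
    (Qstar : X × U → ℝ)
    (hQstar : ∀ x u, Qstar (x, u) = c (x, u) + γ * ∑ x' : X, P u x x' *
      (univ.inf' univ_nonempty fun u' : U => Qstar (x', u')))
    (μ : X × U → ℝ) (hμpos : ∀ z, 0 < μ z) (hμ1 : ∑ z : X × U, μ z = 1)
    (Q : X × U → ℝ)
    (hfeas : ∀ x u, Q (x, u) ≤ c (x, u) + γ * ∑ x' : X, P u x x' *
      (univ.inf' univ_nonempty fun u' : U => Q (x', u')))
    (hobj : ∑ z : X × U, μ z * Q z = ∑ z : X × U, μ z * Qstar z) :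
    Q = Qstar :=
  stmt4_general hP0 (fun u x => (hP1 u x).le) hγ0.le hγ1
    (funext fun z => (hQstar z.1 z.2).symm) hμpos (fun z => hfeas z.1 z.2) hobj.ge
end

section
/- (Consistency of the LP solution.) Under the hypotheses of the LP stability result — the linear program min vᵀθ subject to Āθ ≤ β̄ has a unique optimal solution θ* with active set I₊ of exactly d elements, Ā⁺ invertible, and a dual vector λ* ≥ 0 with Āᵀλ* = −v vanishing off I₊ and strictly positive on I₊ — if (A_N)_{N≥1} and (β_N)_{N≥1} are sequences with A_N → Ā and β_N → β̄, then for all sufficiently large N the linear program min vᵀθ subject to A_N θ ≤ β_N has a unique optimal solution θ_N, and θ_N → θ* as N → ∞. -/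
open Matrix Filter

/-- A point `θ` is optimal for the LP `min vᵀθ s.t. Aθ ≤ β`. -/
def LPOptimal {d dbar : ℕ} (v : Fin d → ℝ) (A : Matrix (Fin dbar) (Fin d) ℝ)
    (β : Fin dbar → ℝ) (θ : Fin d → ℝ) : Prop :=
  (∀ i, A.mulVec θ i ≤ β i) ∧
    ∀ θ' : Fin d → ℝ, (∀ i, A.mulVec θ' i ≤ β i) → v ⬝ᵥ θ ≤ v ⬝ᵥ θ'

/-!
Nonnegative multipliers for the active rows certify the optimality of a feasible point at which
these rows are tight, and strictly positive ones force every optimal point to be tight at the same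
rows, hence to be the basic solution `(A⁺)⁻¹ β⁺` when `A⁺` is invertible. Invertibility of `A⁺`,
positivity of the multipliers `-vᵀ (A⁺)⁻¹` and strict feasibility of the basic solution at the
inactive rows are open conditions on `(v, A, β)`, because `(A⁺)⁻¹` depends continuously on `A` where
`A⁺` is invertible.
-/

section MatrixVectorLimits

variable {α m n R : Type*} [NonUnitalNonAssocSemiring R] [TopologicalSpace R] [ContinuousAdd R]
  [ContinuousMul R] {l : Filter α}

theorem tendsto_mulVec [Fintype n] {M : α → Matrix m n R} {x : α → n → R} {M₀ : Matrix m n R}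
    {x₀ : n → R} (hM : Tendsto M l (nhds M₀)) (hx : Tendsto x l (nhds x₀)) :
    Tendsto (fun a => M a *ᵥ x a) l (nhds (M₀ *ᵥ x₀)) :=
  tendsto_pi_nhds.2 fun i => tendsto_finsetSum _ fun j _ =>
    ((hM.apply_nhds i).apply_nhds j).mul (hx.apply_nhds j)

theorem tendsto_vecMul [Fintype m] {x : α → m → R} {M : α → Matrix m n R} {x₀ : m → R}
    {M₀ : Matrix m n R} (hx : Tendsto x l (nhds x₀)) (hM : Tendsto M l (nhds M₀)) :
    Tendsto (fun a => x a ᵥ* M a) l (nhds (x₀ ᵥ* M₀)) :=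
  tendsto_pi_nhds.2 fun j => tendsto_finsetSum _ fun i _ =>
    (hx.apply_nhds i).mul ((hM.apply_nhds i).apply_nhds j)

end MatrixVectorLimits

section BasicSolution

variable {m n K : Type*} [Fintype n] [DecidableEq n]

/-- The basic solution of `A θ ≤ β` for the rows selected by `ι`: the point at which these rows hold
with equality. It is `0` if the selected square submatrix is not invertible. -/
noncomputable def basicSolution [CommRing K] (ι : n → m) (A : Matrix m n K) (β : m → K) : n → K :=
  (A.submatrix ι id)⁻¹ *ᵥ (β ∘ ι)

/-- The multipliers of the rows selected by `ι` that represent `-v` as a combination of these rows,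
i.e. the dual vector attached to the basic solution. They are indexed by `n` rather than extended by
zero to all rows, and are `0` if the selected square submatrix is not invertible. -/
noncomputable def basicMultiplier [CommRing K] (ι : n → m) (v : n → K) (A : Matrix m n K) : n → K :=
  -v ᵥ* (A.submatrix ι id)⁻¹

section CommRing

variable [CommRing K] {ι : n → m} {A : Matrix m n K}

theorem mulVec_basicSolution_apply (hA : IsUnit (A.submatrix ι id).det) (β : m → K) (k : n) :
    (A *ᵥ basicSolution ι A β) (ι k) = β (ι k) := by
  have h : A.submatrix ι id *ᵥ basicSolution ι A β = β ∘ ι := by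
    rw [basicSolution, mulVec_mulVec, mul_nonsing_inv _ hA, one_mulVec]
  exact congrFun h k

theorem basicSolution_eq_of_mulVec_apply_eq (hA : IsUnit (A.submatrix ι id).det) {β : m → K}
    {θ : n → K} (hθ : ∀ k, (A *ᵥ θ) (ι k) = β (ι k)) : basicSolution ι A β = θ := by
  have h : A.submatrix ι id *ᵥ θ = β ∘ ι := funext hθ
  rw [basicSolution, ← h, mulVec_mulVec, nonsing_inv_mul _ hA, one_mulVec]

theorem basicMultiplier_vecMul (hA : IsUnit (A.submatrix ι id).det) (v : n → K) :
    basicMultiplier ι v A ᵥ* A.submatrix ι id = -v := by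
  rw [basicMultiplier, vecMul_vecMul, nonsing_inv_mul _ hA, vecMul_one]

theorem basicMultiplier_eq_of_vecMul_eq (hA : IsUnit (A.submatrix ι id).det) {v μ : n → K}
    (hμ : μ ᵥ* A.submatrix ι id = -v) : basicMultiplier ι v A = μ := by
  rw [basicMultiplier, ← hμ, vecMul_vecMul, mul_nonsing_inv _ hA, vecMul_one]

end CommRing

section Continuity

variable [Field K] [TopologicalSpace K] [IsTopologicalRing K] [ContinuousInv₀ K]
  {ι : n → m} {A : Matrix m n K}

theorem continuousAt_inv_submatrix (hA : IsUnit (A.submatrix ι id).det) :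
    ContinuousAt (fun M : Matrix m n K => (M.submatrix ι id)⁻¹) A := by
  have hdet : ContinuousAt Ring.inverse (A.submatrix ι id).det := by
    rw [Ring.inverse_eq_inv']
    exact continuousAt_inv₀ hA.ne_zero
  exact (continuousAt_matrix_inv _ hdet).comp
    (f := fun M : Matrix m n K => M.submatrix ι id)
    (continuous_id.matrix_submatrix ι id).continuousAt

theorem continuousAt_basicSolution (hA : IsUnit (A.submatrix ι id).det) (β : m → K) :
    ContinuousAt (fun p : Matrix m n K × (m → K) => basicSolution ι p.1 p.2) (A, β) := by
  have hinv : Tendsto (fun p : Matrix m n K × (m → K) => (p.1.submatrix ι id)⁻¹) (nhds (A, β))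
      (nhds (A.submatrix ι id)⁻¹) :=
    (continuousAt_inv_submatrix hA).tendsto.comp continuousAt_fst
  have hrhs : Continuous fun p : Matrix m n K × (m → K) => p.2 ∘ ι :=
    continuous_pi fun k => (continuous_apply (ι k)).comp continuous_snd
  exact tendsto_mulVec hinv (hrhs.tendsto (A, β))

theorem continuousAt_basicMultiplier (hA : IsUnit (A.submatrix ι id).det) (v : n → K) :
    ContinuousAt (fun p : (n → K) × Matrix m n K => basicMultiplier ι p.1 p.2) (v, A) := by
  have hinv : Tendsto (fun p : (n → K) × Matrix m n K => (p.2.submatrix ι id)⁻¹) (nhds (v, A))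
      (nhds (A.submatrix ι id)⁻¹) :=
    (continuousAt_inv_submatrix hA).tendsto.comp continuousAt_snd
  exact tendsto_vecMul continuousAt_fst.neg hinv

end Continuity

end BasicSolution

theorem vecMul_submatrix_comp_of_injective {κ m n R : Type*} [Fintype κ] [Fintype m]
    [NonUnitalNonAssocSemiring R] {ι : κ → m} (hι : Function.Injective ι) (A : Matrix m n R)
    {w : m → R} (hw : ∀ i ∉ Set.range ι, w i = 0) :
    (w ∘ ι) ᵥ* A.submatrix ι id = w ᵥ* A := by
  funext j
  exact Fintype.sum_of_injective ι hι _ _ (fun i hi => by simp [hw i hi]) fun _ => rfl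

theorem dotProduct_eq_neg_of_vecMul_eq_neg {κ m n R : Type*} [Fintype κ] [Fintype n] [CommRing R]
    {ι : κ → m} {A : Matrix m n R} {v : n → R} {μ : κ → R}
    (hμ : μ ᵥ* A.submatrix ι id = -v) (x : n → R) :
    v ⬝ᵥ x = -∑ k, μ k * (A *ᵥ x) (ι k) := by
  rw [← neg_neg v, ← hμ, neg_dotProduct, ← dotProduct_mulVec]
  rfl

section Optimality

variable {d dbar : ℕ} {κ : Type*} [Fintype κ] {v : Fin d → ℝ} {A : Matrix (Fin dbar) (Fin d) ℝ}
  {β : Fin dbar → ℝ} {θ θ' : Fin d → ℝ}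

theorem lpOptimal_of_nonneg_multiplier {ι : κ → Fin dbar} {μ : κ → ℝ}
    (hμ : μ ᵥ* A.submatrix ι id = -v) (hμ_nonneg : ∀ k, 0 ≤ μ k)
    (hθ : ∀ i, (A *ᵥ θ) i ≤ β i) (htight : ∀ k, (A *ᵥ θ) (ι k) = β (ι k)) :
    LPOptimal v A β θ := by
  refine ⟨hθ, fun x hx => ?_⟩
  rw [dotProduct_eq_neg_of_vecMul_eq_neg hμ, dotProduct_eq_neg_of_vecMul_eq_neg hμ, neg_le_neg_iff]
  refine Finset.sum_le_sum fun k _ => mul_le_mul_of_nonneg_left ?_ (hμ_nonneg k)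
  exact (hx (ι k)).trans_eq (htight k).symm

theorem LPOptimal.mulVec_apply_eq_of_pos_multiplier {ι : κ → Fin dbar} {μ : κ → ℝ}
    (hθ' : LPOptimal v A β θ') (hμ : μ ᵥ* A.submatrix ι id = -v) (hμ_pos : ∀ k, 0 < μ k)
    (hθ : ∀ i, (A *ᵥ θ) i ≤ β i) (htight : ∀ k, (A *ᵥ θ) (ι k) = β (ι k)) (k : κ) :
    (A *ᵥ θ') (ι k) = β (ι k) := by
  have hterm : ∀ k ∈ Finset.univ, μ k * (A *ᵥ θ') (ι k) ≤ μ k * (A *ᵥ θ) (ι k) := fun k _ =>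
    mul_le_mul_of_nonneg_left ((hθ'.1 (ι k)).trans_eq (htight k).symm) (hμ_pos k).le
  have hsum : ∑ k, μ k * (A *ᵥ θ) (ι k) ≤ ∑ k, μ k * (A *ᵥ θ') (ι k) := by
    have hvalue := hθ'.2 θ hθ
    rwa [dotProduct_eq_neg_of_vecMul_eq_neg hμ, dotProduct_eq_neg_of_vecMul_eq_neg hμ,
      neg_le_neg_iff] at hvalue
  have hterm_eq := (Finset.sum_eq_sum_iff_of_le hterm).1
    ((Finset.sum_le_sum hterm).antisymm hsum) k (Finset.mem_univ k)
  rw [mul_left_cancel₀ (hμ_pos k).ne' hterm_eq, htight]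

theorem lpOptimal_iff_eq_basicSolution {ι : Fin d → Fin dbar}
    (hA : IsUnit (A.submatrix ι id).det) (hpos : ∀ k, 0 < basicMultiplier ι v A k)
    (hfeas : ∀ i ∉ Set.range ι, (A *ᵥ basicSolution ι A β) i ≤ β i) :
    LPOptimal v A β θ ↔ θ = basicSolution ι A β := by
  have htight := mulVec_basicSolution_apply hA β
  have hμ := basicMultiplier_vecMul hA v
  have hfeas_all : ∀ i, (A *ᵥ basicSolution ι A β) i ≤ β i := by
    intro i
    by_cases hi : i ∈ Set.range ι
    · obtain ⟨k, rfl⟩ := hi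
      exact (htight k).le
    · exact hfeas i hi
  constructor
  · intro hθ
    exact (basicSolution_eq_of_mulVec_apply_eq hA
      (hθ.mulVec_apply_eq_of_pos_multiplier hμ hpos hfeas_all htight)).symm
  · rintro rfl
    exact lpOptimal_of_nonneg_multiplier hμ (fun k => (hpos k).le) hfeas_all htight

end Optimality

section OpenConditions

variable {m n K : Type*} [Fintype n] [DecidableEq n] [Field K] [LinearOrder K] [TopologicalSpace K]
  [OrderClosedTopology K] [IsTopologicalRing K] [ContinuousInv₀ K] {ι : n → m} {A : Matrix m n K}

theorem eventually_basicMultiplier_pos {v : n → K}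
    (hA : IsUnit (A.submatrix ι id).det) (hpos : ∀ k, 0 < basicMultiplier ι v A k) :
    ∀ᶠ p : (n → K) × Matrix m n K in nhds (v, A), ∀ k, 0 < basicMultiplier ι p.1 p.2 k :=
  eventually_all.2 fun k =>
    (tendsto_pi_nhds.1 (continuousAt_basicMultiplier hA v) k).eventually_const_lt (hpos k)

theorem eventually_mulVec_basicSolution_lt [Finite m] {β : m → K}
    (hA : IsUnit (A.submatrix ι id).det)
    (hlt : ∀ i ∉ Set.range ι, (A *ᵥ basicSolution ι A β) i < β i) :
    ∀ᶠ p : Matrix m n K × (m → K) in nhds (A, β),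
      ∀ i ∉ Set.range ι, (p.1 *ᵥ basicSolution ι p.1 p.2) i < p.2 i := by
  have hlhs := tendsto_mulVec continuousAt_fst (continuousAt_basicSolution hA β)
  refine eventually_all.2 fun i => eventually_imp_distrib_left.2 fun hi => ?_
  exact (tendsto_pi_nhds.1 hlhs i).eventually_lt (tendsto_pi_nhds.1 continuousAt_snd i) (hlt i hi)

end OpenConditions

theorem eventually_lpOptimal_iff_eq_basicSolution {d dbar : ℕ} {v : Fin d → ℝ}
    {A : Matrix (Fin dbar) (Fin d) ℝ} {β : Fin dbar → ℝ} {ι : Fin d → Fin dbar}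
    (hA : IsUnit (A.submatrix ι id).det) (hpos : ∀ k, 0 < basicMultiplier ι v A k)
    (hlt : ∀ i ∉ Set.range ι, (A *ᵥ basicSolution ι A β) i < β i) :
    ∀ᶠ p : (Fin d → ℝ) × Matrix (Fin dbar) (Fin d) ℝ × (Fin dbar → ℝ) in nhds (v, A, β),
      ∀ θ, LPOptimal p.1 p.2.1 p.2.2 θ ↔ θ = basicSolution ι p.2.1 p.2.2 := by
  have hdet : Continuous
      fun p : (Fin d → ℝ) × Matrix (Fin dbar) (Fin d) ℝ × (Fin dbar → ℝ) =>
        (p.2.1.submatrix ι id).det := by fun_prop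
  have hmult : ∀ᶠ p : (Fin d → ℝ) × Matrix (Fin dbar) (Fin d) ℝ × (Fin dbar → ℝ) in nhds (v, A, β),
      ∀ k, 0 < basicMultiplier ι p.1 p.2.1 k :=
    (continuous_fst.prodMk continuous_snd.fst).continuousAt.eventually
      (eventually_basicMultiplier_pos hA hpos)
  filter_upwards [hdet.continuousAt.eventually_ne hA.ne_zero, hmult,
    continuousAt_snd.eventually (eventually_mulVec_basicSolution_lt hA hlt)]
    with p hp_det hp_pos hp_lt
  exact fun θ => lpOptimal_iff_eq_basicSolution hp_det.isUnit hp_pos fun i hi => (hp_lt i hi).le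

theorem stmt17_general {d dbar : ℕ} (v : Fin d → ℝ) (Abar : Matrix (Fin dbar) (Fin d) ℝ)
    (βbar : Fin dbar → ℝ) (θstar : Fin d → ℝ) (hfeas : ∀ i, (Abar *ᵥ θstar) i ≤ βbar i)
    (ι : Fin d → Fin dbar) (hι : Function.Injective ι)
    (hactive : {i : Fin dbar | (Abar *ᵥ θstar) i = βbar i} = Set.range ι)
    (hAplus : IsUnit (Abar.submatrix ι id).det)
    (lam : Fin dbar → ℝ) (hdual : Abarᵀ *ᵥ lam = -v)
    (hlamoff : ∀ i, i ∉ Set.range ι → lam i = 0) (hlamon : ∀ i, i ∈ Set.range ι → 0 < lam i)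
    {α : Type*} {l : Filter α} (w : α → Fin d → ℝ) (A : α → Matrix (Fin dbar) (Fin d) ℝ)
    (β : α → Fin dbar → ℝ) (hw : ∀ j, Tendsto (fun a => w a j) l (nhds (v j)))
    (hA : ∀ i j, Tendsto (fun a => A a i j) l (nhds (Abar i j)))
    (hβ : ∀ i, Tendsto (fun a => β a i) l (nhds (βbar i))) :
    ∃ θ : α → Fin d → ℝ,
      (∀ᶠ a in l, LPOptimal (w a) (A a) (β a) (θ a) ∧
        ∀ θ' : Fin d → ℝ, LPOptimal (w a) (A a) (β a) θ' → θ' = θ a) ∧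
      Tendsto θ l (nhds θstar) := by
  have hactive_iff : ∀ i, (Abar *ᵥ θstar) i = βbar i ↔ i ∈ Set.range ι := Set.ext_iff.1 hactive
  have hθstar : basicSolution ι Abar βbar = θstar :=
    basicSolution_eq_of_mulVec_apply_eq hAplus fun k => (hactive_iff (ι k)).2 ⟨k, rfl⟩
  have hlam : basicMultiplier ι v Abar = lam ∘ ι := basicMultiplier_eq_of_vecMul_eq hAplus <| by
    rw [vecMul_submatrix_comp_of_injective hι Abar hlamoff, ← mulVec_transpose, hdual]
  have hpos : ∀ k, 0 < basicMultiplier ι v Abar k := fun k => hlam ▸ hlamon (ι k) ⟨k, rfl⟩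
  have hlt : ∀ i ∉ Set.range ι, (Abar *ᵥ basicSolution ι Abar βbar) i < βbar i := fun i hi =>
    hθstar ▸ (hfeas i).lt_of_ne (mt (hactive_iff i).1 hi)
  have hstable := eventually_lpOptimal_iff_eq_basicSolution hAplus hpos hlt
  have hA_lim : Tendsto A l (nhds Abar) := tendsto_pi_nhds.2 fun i => tendsto_pi_nhds.2 (hA i)
  have hAβ_lim := hA_lim.prodMk_nhds (tendsto_pi_nhds.2 hβ)
  have hθ_lim := (continuousAt_basicSolution hAplus βbar).tendsto.comp hAβ_lim
  refine ⟨fun a => basicSolution ι (A a) (β a), ?_, hθstar ▸ hθ_lim⟩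
  filter_upwards [((tendsto_pi_nhds.2 hw).prodMk_nhds hAβ_lim).eventually hstable] with a ha
  exact ⟨(ha _).2 rfl, fun θ' => (ha θ').1⟩

/-- Consistency of the LP solution: under the nondegeneracy hypotheses on the limiting
LP `min vᵀθ s.t. Āθ ≤ β̄` (unique optimizer `θ*`, active set of exactly `d` elements,
invertible `Ā⁺`, strictly complementary dual `λ*`), if `A_N → Ā` and `β_N → β̄`, then
for all sufficiently large `N` the LP `min vᵀθ s.t. A_N θ ≤ β_N` has a unique optimal
solution `θ_N`, and `θ_N → θ*`. -/
theorem stmt17 {d dbar : ℕ} (hd : 1 ≤ d) (hdd : d ≤ dbar)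
    (v : Fin d → ℝ) (Abar : Matrix (Fin dbar) (Fin d) ℝ) (βbar : Fin dbar → ℝ)
    (θstar : Fin d → ℝ)
    (hopt : LPOptimal v Abar βbar θstar)
    (huniq : ∀ θ : Fin d → ℝ, LPOptimal v Abar βbar θ → θ = θstar)
    (ι : Fin d → Fin dbar) (hι : Function.Injective ι)
    (hactive : {i : Fin dbar | Abar.mulVec θstar i = βbar i} = Set.range ι)
    (hAplus : IsUnit (Abar.submatrix ι id).det)
    (lam : Fin dbar → ℝ) (hlam0 : ∀ i, 0 ≤ lam i)
    (hdual : Abarᵀ.mulVec lam = -v)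
    (hlamoff : ∀ i, i ∉ Set.range ι → lam i = 0)
    (hlamon : ∀ i, i ∈ Set.range ι → 0 < lam i)
    (A : ℕ → Matrix (Fin dbar) (Fin d) ℝ) (β : ℕ → Fin dbar → ℝ)
    (hA : ∀ i j, Tendsto (fun N => A N i j) atTop (nhds (Abar i j)))
    (hβ : ∀ i, Tendsto (fun N => β N i) atTop (nhds (βbar i))) :
    ∃ (θseq : ℕ → Fin d → ℝ) (N₀ : ℕ),
      (∀ N ≥ N₀, LPOptimal v (A N) (β N) (θseq N) ∧
        ∀ θ : Fin d → ℝ, LPOptimal v (A N) (β N) θ → θ = θseq N) ∧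
      Tendsto θseq atTop (nhds θstar) := by
  obtain ⟨θseq, huniq_opt, hlim⟩ := stmt17_general v Abar βbar θstar hopt.1 ι hι hactive hAplus
    lam hdual hlamoff hlamon (fun _ => v) A β (fun _ => tendsto_const_nhds) hA hβ
  exact (eventually_atTop.1 huniq_opt).elim fun N₀ hN₀ => ⟨θseq, N₀, hN₀, hlim⟩
end
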